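/- arXiv:math-ph/0203027 — 4 statements merged into one kernel-verified Lean document; each statement's English description precedes it below -/
import Mathlib

section
/- Let A be a commutative ℝ-algebra and L₀ ⊆ Der(A) both a Lie subalgebra and an A-submodule. For every A-linear map α : Der(A) → A vanishing on L₀ and all X, Y ∈ L₀, the connection ∇ is flat: ∇_X(∇_Y α) − ∇_Y(∇_X α) = ∇_{⁅X,Y⁆} α as functions on Der(A); i.e., the curvature R(X,Y) = [∇_X, ∇_Y] − ∇_{⁅X,Y⁆} of the connection for the pair (L₀, Ω¹(L,A,L₀)) vanishes. -/
/-- The covariant derivative `(∇_X β)(Y) = X(β Y) − Y(β X) − β ⁅X,Y⁆`. -/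
def nabla {A : Type*} [CommRing A] [Algebra ℝ A]
    (X : Derivation ℝ A A) (β : Derivation ℝ A A → A) : Derivation ℝ A A → A :=
  fun Y => X (β Y) - Y (β X) - β ⁅X, Y⁆

/-- the connection for the pair `(L₀, Ω¹(L,A,L₀))` is flat:
for `X, Y ∈ L₀` and any `A`-linear `α` vanishing on `L₀`,
`∇_X(∇_Y α) − ∇_Y(∇_X α) = ∇_{⁅X,Y⁆} α`. -/
theorem stmt6 {A : Type*} [CommRing A] [Algebra ℝ A]
    (L₀ : Submodule A (Derivation ℝ A A))
    (hLie : ∀ X ∈ L₀, ∀ Y ∈ L₀, ⁅X, Y⁆ ∈ L₀)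
    (α : Derivation ℝ A A →ₗ[A] A) (hα : ∀ Z ∈ L₀, α Z = 0)
    (X Y : Derivation ℝ A A) (hX : X ∈ L₀) (hY : Y ∈ L₀) :
    ∀ W : Derivation ℝ A A,
      nabla X (nabla Y (fun Z => α Z)) W - nabla Y (nabla X (fun Z => α Z)) W
        = nabla ⁅X, Y⁆ (fun Z => α Z) W := by
  intro W
  have hXY := hα _ (hLie X hX Y hY)
  have hYX := hα _ (hLie Y hY X hX)
  have hx := hα _ hX
  have hy := hα _ hY
  have jac : α ⁅⁅X, Y⁆, W⁆ = α ⁅X, ⁅Y, W⁆⁆ - α ⁅Y, ⁅X, W⁆⁆ := by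
    rw [lie_lie, map_sub]
  simp only [nabla, hx, hy, hXY, hYX, jac, map_sub, map_zero, Derivation.commutator_apply]
  ring
end

section
/- Let A be a commutative ℝ-algebra, L₀ ⊆ Der(A) both a Lie subalgebra and an A-submodule, and I ⊆ A an ideal invariant under L₀ (X(I) ⊆ I for every X ∈ L₀). Then for every a ∈ I, u ∈ L₀, and every A-linear α : Der(A) → A vanishing on L₀, one has ∇_{a•u}(α) = a•(∇_u α); in particular ∇_{a•u}(α) lies in I·Ω¹(L,A,L₀), so the induced action of the Lie subalgebra I·L₀ on the quotient module Ω¹(L,A,L₀)/I·Ω¹(L,A,L₀) is trivial. -/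
/-- The `A`-submodule `I·Ω¹(L,A,L₀)` of functions `Der(A) → A`, generated by the
products `b • β` with `b ∈ I` and `β` an `A`-linear 1-form vanishing on `L₀`. -/
def IOmega {A : Type*} [CommRing A] [Algebra ℝ A]
    (I : Ideal A) (L₀ : Submodule A (Derivation ℝ A A)) :
    Submodule A (Derivation ℝ A A → A) :=
  Submodule.span A
    {g | ∃ b ∈ I, ∃ β : Derivation ℝ A A →ₗ[A] A,
      (∀ Z ∈ L₀, β Z = 0) ∧ g = fun Y => b * β Y}

/-- if the ideal `I` is invariant under `L₀`, then for `a ∈ I`, `u ∈ L₀`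
and an `A`-linear `α` vanishing on `L₀`: `∇_{a•u}(α) = a•(∇_u α)`; in particular
`∇_{a•u}(α) ∈ I·Ω¹(L,A,L₀)`, so the induced action of `I·L₀` on the quotient
`Ω¹(L,A,L₀)/I·Ω¹(L,A,L₀)` is trivial. -/
theorem stmt8 {A : Type*} [CommRing A] [Algebra ℝ A]
    (L₀ : Submodule A (Derivation ℝ A A))
    (hLie : ∀ X ∈ L₀, ∀ Y ∈ L₀, ⁅X, Y⁆ ∈ L₀)
    (I : Ideal A) (hI : ∀ X ∈ L₀, ∀ a ∈ I, X a ∈ I)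
    (a : A) (ha : a ∈ I) (u : Derivation ℝ A A) (hu : u ∈ L₀)
    (α : Derivation ℝ A A →ₗ[A] A) (hα : ∀ Z ∈ L₀, α Z = 0) :
    (∀ Y : Derivation ℝ A A,
        nabla (a • u) (fun W => α W) Y = a * nabla u (fun W => α W) Y) ∧
    nabla (a • u) (fun W => α W) ∈ IOmega I L₀ := by
  have h1 : ∀ (b : A) (Y : Derivation ℝ A A), ⁅u, b • Y⁆ = u b • Y + b • ⁅u, Y⁆ := by
    intro b Y
    ext x
    simp only [Derivation.commutator_apply, Derivation.smul_apply, Derivation.add_apply,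
      smul_eq_mul, Derivation.leibniz]
    ring
  have h2 : ∀ Y : Derivation ℝ A A, ⁅a • u, Y⁆ = a • ⁅u, Y⁆ - Y a • u := by
    intro Y
    ext x
    simp only [Derivation.commutator_apply, Derivation.smul_apply, Derivation.sub_apply,
      smul_eq_mul, Derivation.leibniz]
    ring
  have key : ∀ Y : Derivation ℝ A A,
      nabla (a • u) (fun W => α W) Y = a * nabla u (fun W => α W) Y := by
    intro Y
    simp only [nabla, h2, map_sub, map_smul, hα u hu, Derivation.smul_apply, smul_eq_mul,
      mul_zero, map_zero]
    ring
  refine ⟨key, Submodule.subset_span ⟨a, ha,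
    { toFun := nabla u (fun W => α W)
      map_add' := ?_
      map_smul' := ?_ }, ?_, funext key⟩⟩
  · intro X Y
    simp only [nabla, hα u hu, map_zero, lie_add, map_add]
    ring
  · intro b Y
    simp only [nabla, hα u hu, map_zero, h1, map_add, map_smul, smul_eq_mul,
      Derivation.leibniz, RingHom.id_apply]
    ring
  · intro Z hZ
    change nabla u (fun W => α W) Z = 0
    simp only [nabla, hα u hu, hα Z hZ, hα _ (hLie u hu Z hZ), map_zero, sub_zero]
end

section
/- Let A be a commutative ℝ-algebra, D ⊆ Der(A) a Lie subalgebra, and I ⊆ A an ideal. Let V ∈ D satisfy V(A) ⊆ I (i.e., V ∈ D_I), and let α : Der(A) → A be of the form α(X) = Σᵢ aᵢ·X(bᵢ) for finite families aᵢ, bᵢ ∈ A, with α(Z) = 0 for every Z ∈ D. Then for every X ∈ Der(A), the Lie derivative evaluates in I: V(α(X)) − X(α(V)) − α(⁅V, X⁆) ∈ I. (Hence the Bott connection on the quotient module Γ(D,I) is well defined.) -/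
/-- let `D ⊆ Der(A)` be a Lie subalgebra, `I ⊆ A` an ideal, `V ∈ D`
with `V(A) ⊆ I`, and let `α : Der(A) → A` be of the form `α(X) = Σᵢ aᵢ·X(bᵢ)`
with `α` vanishing on `D`.  Then for every `X ∈ Der(A)`,
`V(α X) − X(α V) − α ⁅V,X⁆ ∈ I`. -/
theorem stmt10 {A : Type*} [CommRing A] [Algebra ℝ A]
    (D : Set (Derivation ℝ A A))
    (hD : ∀ X ∈ D, ∀ Y ∈ D, ⁅X, Y⁆ ∈ D)
    (I : Ideal A)
    (V : Derivation ℝ A A) (hVD : V ∈ D) (hVI : ∀ a : A, V a ∈ I)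
    (α : Derivation ℝ A A → A)
    (n : ℕ) (a b : Fin n → A)
    (hα : ∀ X : Derivation ℝ A A, α X = ∑ i, a i * X (b i))
    (hα0 : ∀ Z ∈ D, α Z = 0) :
    ∀ X : Derivation ℝ A A, V (α X) - X (α V) - α ⁅V, X⁆ ∈ I := by
  intro X
  have key : V (α X) - X (α V) - α ⁅V, X⁆
      = ∑ i, (V (a i) * X (b i) - X (a i) * V (b i)) := by
    rw [hα X, hα V, hα ⁅V, X⁆, map_sum, map_sum, ← Finset.sum_sub_distrib,
      ← Finset.sum_sub_distrib]
    refine Finset.sum_congr rfl fun i _ => ?_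
    simp only [Derivation.leibniz, Derivation.commutator_apply, smul_eq_mul]
    ring
  rw [key]
  exact I.sum_mem fun i _ =>
    I.sub_mem (I.mul_mem_right _ (hVI _)) (I.mul_mem_left _ (hVI _))
end

section
/- Let A be a commutative ℝ-algebra, I ⊆ A an ideal with quotient map π : A → A/I, J an ideal of A/I with quotient map ρ : A/I → (A/I)/J, and K = π⁻¹(J), an ideal of A with quotient map σ : A → A/K. Assume: (i) for every derivation D of A/I there exists a derivation X of A with X(I) ⊆ I and π(X(a)) = D(π(a)) for all a ∈ A; and (ii) for every derivation E of (A/I)/J there exists a derivation D of A/I with D(J) ⊆ J and ρ(D(b)) = E(ρ(b)) for all b ∈ A/I. Then for every derivation F of A/K there exists a derivation X of A with X(K) ⊆ K and σ(X(a)) = F(σ(a)) for all a ∈ A. (Thus if A/I is a submanifold algebra of A, the projection q : A → A/I is a submanifold mapping.) -/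
/-- let `I` be an ideal of `A`, `J` an ideal of `A/I`, and
`K = π⁻¹(J)`.  If (i) every derivation of `A/I` lifts to a derivation of `A`
preserving `I`, and (ii) every derivation of `(A/I)/J` lifts to a derivation of
`A/I` preserving `J`, then every derivation of `A/K` lifts to a derivation of `A`
preserving `K`.  (If `A/I` is a submanifold algebra, `q : A → A/I` is a
submanifold mapping.) -/
theorem stmt16 {A : Type*} [CommRing A] [Algebra ℝ A]
    (I : Ideal A) (J : Ideal (A ⧸ I))
    (hi : ∀ D : Derivation ℝ (A ⧸ I) (A ⧸ I), ∃ X : Derivation ℝ A A,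
      (∀ a ∈ I, X a ∈ I) ∧
      ∀ a : A, Ideal.Quotient.mk I (X a) = D (Ideal.Quotient.mk I a))
    (hii : ∀ E : Derivation ℝ ((A ⧸ I) ⧸ J) ((A ⧸ I) ⧸ J),
      ∃ D : Derivation ℝ (A ⧸ I) (A ⧸ I),
      (∀ b ∈ J, D b ∈ J) ∧
      ∀ b : A ⧸ I, Ideal.Quotient.mk J (D b) = E (Ideal.Quotient.mk J b)) :
    ∀ F : Derivation ℝ (A ⧸ J.comap (Ideal.Quotient.mk I))
        (A ⧸ J.comap (Ideal.Quotient.mk I)),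
      ∃ X : Derivation ℝ A A,
        (∀ a ∈ J.comap (Ideal.Quotient.mk I), X a ∈ J.comap (Ideal.Quotient.mk I)) ∧
        ∀ a : A, Ideal.Quotient.mk (J.comap (Ideal.Quotient.mk I)) (X a)
          = F (Ideal.Quotient.mk (J.comap (Ideal.Quotient.mk I)) a) := by
  intro F
  let f : (A ⧸ J.comap (Ideal.Quotient.mk I)) →ₐ[ℝ] ((A ⧸ I) ⧸ J) :=
    Ideal.quotientMapₐ J (Ideal.Quotient.mkₐ ℝ I) le_rfl
  have hf : ∀ a : A, f (Ideal.Quotient.mk (J.comap (Ideal.Quotient.mk I)) a)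
      = Ideal.Quotient.mk J (Ideal.Quotient.mk I a) := fun a => rfl
  have hinj : Function.Injective f := by
    rw [injective_iff_map_eq_zero]
    intro x
    obtain ⟨a, rfl⟩ := Ideal.Quotient.mk_surjective x
    intro h
    rw [hf, Ideal.Quotient.eq_zero_iff_mem] at h
    exact Ideal.Quotient.eq_zero_iff_mem.mpr h
  have hsurj : Function.Surjective f := by
    intro y
    obtain ⟨b, rfl⟩ := Ideal.Quotient.mk_surjective y
    obtain ⟨a, rfl⟩ := Ideal.Quotient.mk_surjective b
    exact ⟨_, hf a⟩
  let e := AlgEquiv.ofBijective f ⟨hinj, hsurj⟩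
  have he : ∀ x, e x = f x := fun x => rfl
  let E : Derivation ℝ ((A ⧸ I) ⧸ J) ((A ⧸ I) ⧸ J) :=
    Derivation.mk' (e.toLinearMap ∘ₗ F.toLinearMap ∘ₗ e.symm.toLinearMap) (by
      intro a b
      change e (F (e.symm (a * b))) = a • e (F (e.symm b)) + b • e (F (e.symm a))
      rw [map_mul, Derivation.leibniz]
      simp only [smul_eq_mul, map_add, map_mul, AlgEquiv.apply_symm_apply])
  have hE : ∀ x, E (e x) = e (F x) := by
    intro x
    change e (F (e.symm (e x))) = _
    rw [AlgEquiv.symm_apply_apply]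
  obtain ⟨D, hDJ, hD⟩ := hii E
  obtain ⟨X, hXI, hX⟩ := hi D
  refine ⟨X, ?_, ?_⟩
  · intro a ha
    rw [Ideal.mem_comap] at ha ⊢
    rw [hX]
    exact hDJ _ ha
  · intro a
    apply hinj
    rw [hf, hX, hD, ← hf, ← he, hE, he]
end
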